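/- Let n ≥ 2, let H be a hyperplane in ℝⁿ, and let 𝒥′ ⊂ 𝒥_H(𝒦ⁿₙ). A map ∂ ∈ 𝒥_H(𝒦ⁿₙ) is approximable on 𝒦ⁿₙ by maps in 𝒥′ (i.e., there is a single sequence (∂_k) in 𝒥′ with ‖1_{∂_k K} − 1_{∂K}‖_{L¹} → 0 for every K ∈ 𝒦ⁿₙ) if and only if it is weakly approximable on 𝒦ⁿₙ by maps in 𝒥′ (i.e., for each K ∈ 𝒦ⁿₙ there are ∂_{K,k} ∈ 𝒥′ with ‖1_{∂_{K,k} K} − 1_{∂K}‖_{L¹} → 0). -/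

import Mathlib

open MeasureTheory Metric Filter Topology
open scoped RealInnerProductSpace

noncomputable section

abbrev Euc (n : ℕ) : Type := EuclideanSpace ℝ (Fin n)

/-- `A` is essentially contained in `B` (up to a set of measure zero). -/
def essSub {n : ℕ} (A B : Set (Euc n)) : Prop := volume (A \ B) = 0

/-- `A` is essentially equal to `B` (up to a set of measure zero). -/
def essEq {n : ℕ} (A B : Set (Euc n)) : Prop := volume ((A \ B) ∪ (B \ A)) = 0

/-- The symmetric difference of two sets. -/
def sd {n : ℕ} (A B : Set (Euc n)) : Set (Euc n) := (A \ B) ∪ (B \ A)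

/-- A convex body: a compact convex set with nonempty interior. -/
def isConvexBody {n : ℕ} (A : Set (Euc n)) : Prop :=
  IsCompact A ∧ Convex ℝ A ∧ (interior A).Nonempty

/-- The infinite spherical cylinder of radius `ρ` whose axis passes through `c`
in direction `u`. -/
def cyl {n : ℕ} (u c : Euc n) (ρ : ℝ) : Set (Euc n) :=
  {y | ‖(y - c) - ⟪y - c, u⟫ • u‖ ≤ ρ}

/-- Membership in `𝒥_H(𝒦ⁿₙ)`: a map on convex bodies, with values in `𝓛ⁿ`, that is
monotonic, measure preserving, maps balls to balls, and respects `H`-cylinders,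
where `H` is a hyperplane with unit normal `u`. -/
def inJH {n : ℕ} (u : Euc n) (D : Set (Euc n) → Set (Euc n)) : Prop :=
  (∀ A : Set (Euc n), isConvexBody A → MeasurableSet (D A) ∧ volume (D A) ≠ ⊤) ∧
  (∀ A B : Set (Euc n), isConvexBody A → isConvexBody B →
      essSub A B → essSub (D A) (D B)) ∧
  (∀ A : Set (Euc n), isConvexBody A → volume (D A) = volume A) ∧
  (∀ A : Set (Euc n), isConvexBody A →
      (∃ (x : Euc n) (r : ℝ), 0 < r ∧ essEq A (closedBall x r)) →
      ∃ (x' : Euc n) (r' : ℝ), 0 < r' ∧ essEq (D A) (closedBall x' r')) ∧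
  (∀ A : Set (Euc n), isConvexBody A → ∀ (c : Euc n) (ρ : ℝ), 0 < ρ →
      essSub A (cyl u c ρ) → essSub (D A) (cyl u c ρ))

/-- `φ` is the contraction associated with `D` (with respect to the direction `u`):
`∂B(x + tu, r) = B(x + φ(t)u, r)`, essentially. -/
def assocContr {n : ℕ} (u : Euc n) (D : Set (Euc n) → Set (Euc n)) (φ : ℝ → ℝ) : Prop :=
  LipschitzWith 1 φ ∧ ∀ x : Euc n, ⟪x, u⟫ = 0 → ∀ t r : ℝ, 0 < r →
    essEq (D (closedBall (x + t • u) r)) (closedBall (x + φ t • u) r)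

/-- Convergence `∂_k → ∂` on the convex bodies, in the `L¹` sense of indicator functions. -/
def convOnK {n : ℕ} (Dk : ℕ → Set (Euc n) → Set (Euc n))
    (D : Set (Euc n) → Set (Euc n)) : Prop :=
  ∀ K : Set (Euc n), isConvexBody K →
    Tendsto (fun k => volume (sd (Dk k K) (D K))) atTop (𝓝 0)

/-!
A map `D` in `𝒥_H(𝒦ⁿₙ)` sends the ball `B(x + tu, r)` to `B(x + φ(t)u, r)` for some contraction `φ`
of the line. By monotonicity and the cylinder condition, it then moves each cap (a ball
intersected with a coaxial cylinder) rigidly, and thin caps exhaust the interior of a convex body: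
up to null sets, `D K` contains the set obtained by sliding each chord of `K` parallel to `u` so
that its midpoint moves from height `t` to height `φ(t)`. Sliding chords preserves volume, so the
two sets are essentially equal.

Hence pointwise convergence of the contractions implies convergence of the maps on every convex
body. Conversely, the midpoints of the chords of a single slanted slab of slope `m` cover the
heights in `[-m, m]`, so a map that is close to `D` on this slab has a contraction uniformly close
to `φ` on `[-m, m]`. Choosing weak approximants on slabs of slopes tending to infinity gives
contractions converging pointwise to `φ`, and one sequence that works for all bodies.
-/

section ShearMeasure

variable {E : Type*} [NormedAddCommGroup E] [NormedSpace ℝ E] [SecondCountableTopology E]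
  [MeasurableSpace E] [BorelSpace E]

-- On `E × ℝ`, the four shears `(y, s) ↦ (y - s • v, s) ↦ (y - s • v, s + f y) ↦
-- (y + f y • v, s + f y) ↦ (y + f y • v, s)` are skew products of translations.
lemma measurePreserving_add_smul (μ : Measure E) [SFinite μ] [μ.IsAddRightInvariant] {v : E}
    {f : E → ℝ} (hf : Measurable f) (hfv : ∀ y (s : ℝ), f (y + s • v) = f y) :
    MeasurePreserving (fun y => y + f y • v) μ μ := by
  have along (c : ℝ) : MeasurePreserving (fun p : ℝ × E => (p.1, p.2 + (c * p.1) • v))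
      (volume.prod μ) (volume.prod μ) :=
    (MeasurePreserving.id volume).skew_product (g := fun s y => y + (c * s) • v)
      (by simp only [Function.uncurry_def]; fun_prop)
      (ae_of_all _ fun s => map_add_right_eq_self μ _)
  have across (c : ℝ) : MeasurePreserving (fun p : E × ℝ => (p.1, p.2 + c * f p.1))
      (μ.prod volume) (μ.prod volume) :=
    (MeasurePreserving.id μ).skew_product (g := fun y s => s + c * f y)
      (by simp only [Function.uncurry_def]; fun_prop)
      (ae_of_all _ fun y => map_add_right_eq_self volume _)
  have hcomp : MeasurePreserving (fun p : ℝ × E => (p.2 + f p.2 • v, p.1))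
      (volume.prod μ) (μ.prod volume) := by
    convert (across (-1)).comp (Measure.measurePreserving_swap.comp ((along 1).comp
      (Measure.measurePreserving_swap.comp ((across 1).comp
        (Measure.measurePreserving_swap.comp (along (-1))))))) using 1
    funext p
    simp only [Function.comp_apply, Prod.swap_prod_mk, hfv, Prod.mk.injEq]
    exact ⟨by module, by ring⟩
  have hmeas : Measurable fun y => y + f y • v := by fun_prop
  refine ⟨hmeas, Measure.ext fun S hS => ?_⟩
  have h := hcomp.measure_preimage
    (hS.prod (measurableSet_Icc (a := (0 : ℝ)) (b := 1))).nullMeasurableSet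
  rw [show (fun p : ℝ × E => (p.2 + f p.2 • v, p.1)) ⁻¹' S ×ˢ Set.Icc 0 1 =
    Set.Icc 0 1 ×ˢ ((fun y => y + f y • v) ⁻¹' S) by ext; simp [and_comm], Measure.prod_prod,
    Measure.prod_prod, Real.volume_Icc] at h
  simpa [Measure.map_apply hmeas hS] using h

end ShearMeasure

section Balls

variable {E : Type*} [NormedAddCommGroup E] [NormedSpace ℝ E]

lemma closedBall_subset_of_ae_le [MeasurableSpace E] {μ : Measure E} [μ.IsOpenPosMeasure]
    {x : E} {r : ℝ} (hr : r ≠ 0) {F : Set E} (hF : IsClosed F)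
    (h : closedBall x r ≤ᵐ[μ] F) : closedBall x r ⊆ F := by
  have hempty : ball x r \ F = ∅ :=
    ((isOpen_ball.sdiff hF).measure_eq_zero_iff μ).1 <|
      measure_mono_null (Set.sdiff_subset_sdiff_left ball_subset_closedBall) (ae_le_set.1 h)
  rw [← closure_ball x hr]
  exact closure_minimal (Set.sdiff_eq_empty.1 hempty) hF

lemma dist_add_le_of_closedBall_subset [Nontrivial E] {x y : E} {r s : ℝ} (hr : 0 ≤ r)
    (h : closedBall x r ⊆ closedBall y s) : dist x y + r ≤ s := by
  obtain ⟨v, hv, hxy⟩ : ∃ v : E, ‖v‖ = 1 ∧ x - y = ‖x - y‖ • v := by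
    rcases eq_or_ne x y with rfl | hne
    · obtain ⟨v, hv⟩ := exists_norm_eq E zero_le_one
      exact ⟨v, hv, by simp⟩
    · have hpos : ‖x - y‖ ≠ 0 := norm_ne_zero_iff.2 (sub_ne_zero.2 hne)
      exact ⟨‖x - y‖⁻¹ • (x - y), norm_smul_inv_norm (𝕜 := ℝ) (sub_ne_zero.2 hne),
        (smul_inv_smul₀ hpos _).symm⟩
  have hmem : x + r • v ∈ closedBall y s :=
    h (by simp [norm_smul, hv, abs_of_nonneg hr])
  rw [mem_closedBall, dist_eq_norm, add_sub_right_comm, hxy, ← add_smul, norm_smul, hv,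
    mul_one, Real.norm_of_nonneg (by positivity)] at hmem
  rwa [dist_eq_norm]

lemma eq_of_addHaar_closedBall_eq [FiniteDimensional ℝ E] [Nontrivial E] [MeasurableSpace E]
    [BorelSpace E] {μ : Measure E} [μ.IsAddHaarMeasure] {x y : E} {r s : ℝ} (hr : 0 ≤ r)
    (hs : 0 ≤ s) (h : μ (closedBall x r) = μ (closedBall y s)) : r = s := by
  rw [Measure.addHaar_closedBall _ _ hr, Measure.addHaar_closedBall _ _ hs,
    ENNReal.mul_left_inj (measure_ball_pos _ _ one_pos).ne' measure_ball_lt_top.ne,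
    ENNReal.ofReal_eq_ofReal_iff (by positivity) (by positivity)] at h
  exact (pow_left_inj₀ hr hs Module.finrank_pos.ne').1 h

end Balls

lemma add_smul_mem_interior_of_eventually_mem {E : Type*} [AddCommGroup E] [Module ℝ E]
    [TopologicalSpace E] [IsTopologicalAddGroup E] [ContinuousConstSMul ℝ E] {K : Set E}
    (hK : Convex ℝ K) {y v : E} (hy : y ∈ interior K) {t : ℝ}
    (ht : ∀ᶠ s in 𝓝 t, y + s • v ∈ K) : y + t • v ∈ interior K := by
  have hlim : Tendsto (fun s : ℝ => (1 + s) * t) (𝓝[>] 0) (𝓝 t) := by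
    refine tendsto_nhdsWithin_of_tendsto_nhds (Continuous.tendsto' (by fun_prop) _ _ ?_)
    rw [add_zero, one_mul]
  obtain ⟨s, hbeyond, hs : 0 < s⟩ := ((hlim.eventually ht).and self_mem_nhdsWithin).exists
  convert hK.combo_interior_self_mem_interior hy hbeyond (a := s / (1 + s)) (b := 1 / (1 + s))
    (by positivity) (by positivity) (by field_simp; ring) using 1
  match_scalars <;> field_simp
  ring

section HeightShift

variable {E : Type*} [NormedAddCommGroup E] [InnerProductSpace ℝ E]

lemma exists_norm_eq_one_inner_eq_zero [FiniteDimensional ℝ E]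
    (hE : 2 ≤ Module.finrank ℝ E) (u : E) : ∃ e : E, ‖e‖ = 1 ∧ ⟪e, u⟫ = 0 := by
  have hsum := (ℝ ∙ u).finrank_add_finrank_orthogonal
  have hle : Module.finrank ℝ (ℝ ∙ u) ≤ 1 :=
    (finrank_span_le_card ({u} : Set E)).trans (by simp)
  have : Nontrivial (ℝ ∙ u)ᗮ := Module.finrank_pos_iff.1 (by omega : 0 < Module.finrank ℝ (ℝ ∙ u)ᗮ)
  obtain ⟨e, he⟩ := exists_norm_eq (ℝ ∙ u)ᗮ zero_le_one
  exact ⟨e, he, Submodule.mem_orthogonal_singleton_iff_inner_left.1 e.2⟩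

lemma eq_of_dist_add_smul_le {u x x' : E} (hu : ‖u‖ = 1) (hx : ⟪x, u⟫ = 0) (hx' : ⟪x', u⟫ = 0)
    {s s' : ℝ} (h : dist (x + s • u) (x' + s' • u) ≤ dist x x') : s = s' := by
  have hpyth := norm_add_sq_eq_norm_sq_add_norm_sq_of_inner_eq_zero (x - x') ((s - s') • u)
    (by rw [real_inner_smul_right, inner_sub_left, hx, hx', sub_zero, mul_zero])
  rw [dist_eq_norm, dist_eq_norm, add_sub_add_comm, ← sub_smul,
    mul_self_le_mul_self_iff (norm_nonneg _) (norm_nonneg _), hpyth, add_le_iff_nonpos_right,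
    norm_smul, hu, mul_one, ← sq, sq_nonpos_iff, norm_eq_zero, sub_eq_zero] at h
  exact h

lemma exists_lipschitzWith_of_dist_shift_le {u e : E} (hu : ‖u‖ = 1) (he : ‖e‖ = 1)
    (heu : ⟪e, u⟫ = 0) {T : E → ℝ → ℝ → ℝ}
    (hT : ∀ x x' t t' r r', ⟪x, u⟫ = 0 → ⟪x', u⟫ = 0 → 0 < r →
      dist (x + t • u) (x' + t' • u) + r ≤ r' →
      dist (x + T x t r • u) (x' + T x' t' r' • u) + r ≤ r') :
    ∃ φ : ℝ → ℝ, LipschitzWith 1 φ ∧ ∀ x t r, ⟪x, u⟫ = 0 → 0 < r → T x t r = φ t := by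
  have slide {x x' : E} {t r : ℝ} (hx : ⟪x, u⟫ = 0) (hx' : ⟪x', u⟫ = 0) (hr : 0 < r) :
      T x t r = T x' t (r + dist x x') := by
    have h := hT x x' t t r _ hx hx' hr (by rw [dist_add_right, add_comm])
    exact eq_of_dist_add_smul_le hu hx hx' (by linarith)
  have hradius {x : E} {t r r' : ℝ} (hx : ⟪x, u⟫ = 0) (hr : 0 < r) (hrr' : r ≤ r') :
      T x t r = T x t r' := by
    have hd : ‖((r' - r) / 2) • e‖ = (r' - r) / 2 := by
      rw [norm_smul, he, mul_one, Real.norm_of_nonneg (by linarith)]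
    have hxe : ⟪x + ((r' - r) / 2) • e, u⟫ = 0 := by
      rw [inner_add_left, real_inner_smul_left, hx, heu, mul_zero, add_zero]
    rw [slide hx hxe hr, slide hxe hx (by positivity), dist_self_add_right, dist_self_add_left, hd]
    congr 1
    ring
  have hφ {x : E} {t r : ℝ} (hx : ⟪x, u⟫ = 0) (hr : 0 < r) : T x t r = T 0 t 1 := by
    rw [slide hx (inner_zero_left u) hr, ← hradius (x := 0) (inner_zero_left u) hr (by simp)]
    rcases le_total r 1 with h | h
    · exact hradius (inner_zero_left u) hr h
    · exact (hradius (inner_zero_left u) one_pos h).symm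
  refine ⟨fun t => T 0 t 1, LipschitzWith.of_dist_le_mul fun t t' => ?_,
    fun x t r hx hr => hφ hx hr⟩
  have h := hT 0 0 t t' 1 (dist t t' + 1) (inner_zero_left u) (inner_zero_left u) one_pos
    (by simp [dist_eq_norm, ← sub_smul, norm_smul, hu])
  rw [hφ (inner_zero_left u) (by positivity : 0 < dist t t' + 1), add_le_add_iff_right] at h
  simpa [dist_eq_norm, ← sub_smul, norm_smul, hu] using h

end HeightShift

lemma tendsto_measure_sd {n : ℕ} {Ak : ℕ → Set (Euc n)} {A : Set (Euc n)}
    (hAk : ∀ k, MeasurableSet (Ak k)) (hA : MeasurableSet A) (hfin : volume A ≠ ⊤)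
    (hvol : ∀ k, volume (Ak k) = volume A) (h : ∀ᵐ y, y ∈ A → ∀ᶠ k in atTop, y ∈ Ak k) :
    Tendsto (fun k => volume (sd (Ak k) A)) atTop (𝓝 0) := by
  have hlim : Tendsto (fun k => volume (A \ Ak k)) atTop (𝓝 0) := by
    rw [← measure_empty (μ := (volume : Measure (Euc n)))]
    refine tendsto_measure_of_ae_tendsto_indicator atTop .empty (fun k => hA.diff (hAk k)) hA hfin
      (Eventually.of_forall fun k => Set.sdiff_subset) ?_
    filter_upwards [h] with y hy
    by_cases hyA : y ∈ A
    · filter_upwards [hy hyA] with k hk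
      simp [hk]
    · simp [hyA]
  have hsymm (k : ℕ) : volume (Ak k \ A) = volume (A \ Ak k) :=
    measure_sdiff_symm (hAk k).nullMeasurableSet hA.nullMeasurableSet (hvol k)
      (measure_ne_top_of_subset Set.inter_subset_right hfin)
  refine tendsto_of_tendsto_of_tendsto_of_le_of_le tendsto_const_nhds
    (by simpa using hlim.add hlim) (fun k => zero_le) fun k => ?_
  exact (measure_union_le _ _).trans_eq (by rw [hsymm])

section Chords

variable {E : Type*} [NormedAddCommGroup E] [InnerProductSpace ℝ E]

/-- The orthogonal projection onto the hyperplane `u⊥`. -/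
def perpProj (u : E) : E →L[ℝ] E := (ℝ ∙ u)ᗮ.starProjection

lemma norm_perpProj_le (u y : E) : ‖perpProj u y‖ ≤ ‖y‖ :=
  Submodule.norm_starProjection_apply_le _ y

/-- The heights, in the direction `u`, of the points of the chord of `K` that is parallel to `u`
and lies on the same line as `y`. -/
def chordHeights (u : E) (K : Set E) (y : E) : Set ℝ := {t | perpProj u y + t • u ∈ K}

/-- The height of the midpoint of the chord of `K` parallel to `u` through `y`. It is the junk
value `0` where the line through `y` misses `K`. -/
def midHeight (u : E) (K : Set E) (y : E) : ℝ :=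
  (sSup (chordHeights u K y) + sInf (chordHeights u K y)) / 2

/-- The shear in the direction `u` that moves `y` by `t - φ t`, where `t` is the height of the
midpoint of the chord of `K` on the line through `y`. The sliding of chords in `chordShift` is
encoded as a preimage under this shear. -/
def chordUnshift (u : E) (φ : ℝ → ℝ) (K : Set E) (y : E) : E :=
  y + (midHeight u K y - φ (midHeight u K y)) • u

/-- The set obtained from `K` by sliding each chord parallel to `u` along its line so that its
midpoint moves from height `t` to height `φ t`. -/
def chordShift (u : E) (φ : ℝ → ℝ) (K : Set E) : Set E := chordUnshift u φ K ⁻¹' K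

variable {u : E}

lemma perpProj_apply (hu : ‖u‖ = 1) (y : E) : perpProj u y = y - ⟪y, u⟫ • u := by
  rw [perpProj, Submodule.starProjection_orthogonal_val,
    Submodule.starProjection_unit_singleton ℝ hu, real_inner_comm]

lemma perpProj_add_inner_smul (hu : ‖u‖ = 1) (y : E) : perpProj u y + ⟪y, u⟫ • u = y := by
  rw [perpProj_apply hu, sub_add_cancel]

lemma inner_add_smul_self (hu : ‖u‖ = 1) (y : E) (s : ℝ) : ⟪y + s • u, u⟫ = ⟪y, u⟫ + s := by
  rw [inner_add_left, real_inner_smul_left, real_inner_self_eq_norm_sq, hu, one_pow, mul_one]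

lemma perpProj_self (u : E) : perpProj u u = 0 :=
  Submodule.starProjection_orthogonal_apply_eq_zero (Submodule.mem_span_singleton_self u)

lemma perpProj_add_smul (y : E) (s : ℝ) : perpProj u (y + s • u) = perpProj u y := by
  rw [map_add, map_smul, perpProj_self, smul_zero, add_zero]

lemma inner_perpProj (hu : ‖u‖ = 1) (y : E) : ⟪perpProj u y, u⟫ = 0 := by
  rw [perpProj_apply hu, sub_eq_add_neg, ← neg_smul, inner_add_smul_self hu, add_neg_cancel]

lemma perpProj_perpProj (y : E) : perpProj u (perpProj u y) = perpProj u y :=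
  Submodule.starProjection_eq_self_iff.2 (Submodule.starProjection_apply_mem _ y)

lemma perpProj_eq_of_closedBall_subset {x c : E} {r : ℝ} (hr : 0 < r)
    (h : closedBall x r ⊆ perpProj u ⁻¹' closedBall (perpProj u c) r) :
    perpProj u x = perpProj u c := by
  by_contra hne
  set w := perpProj u x - perpProj u c with hw
  have hpos : 0 < ‖w‖ := norm_pos_iff.2 (sub_ne_zero.2 hne)
  have hproj : perpProj u w = w := by rw [hw, map_sub, perpProj_perpProj, perpProj_perpProj]
  have hmem : x + (r / ‖w‖) • w ∈ closedBall x r := by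
    rw [mem_closedBall_iff_norm, add_sub_cancel_left, norm_smul, norm_div, norm_norm,
      div_mul_cancel₀ _ hpos.ne', Real.norm_of_nonneg hr.le]
  have hle := mem_closedBall_iff_norm.1 (h hmem)
  rw [map_add, map_smul, hproj, add_sub_right_comm, ← hw,
    show w + (r / ‖w‖) • w = (1 + r / ‖w‖) • w by module, norm_smul,
    Real.norm_of_nonneg (by positivity), add_mul, div_mul_cancel₀ _ hpos.ne'] at hle
  linarith

lemma inner_add_mem_chordHeights (hu : ‖u‖ = 1) {K : Set E} {y : E} {s : ℝ} :
    ⟪y, u⟫ + s ∈ chordHeights u K y ↔ y + s • u ∈ K := by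
  rw [chordHeights, Set.mem_ofPred_eq, add_smul, ← add_assoc, perpProj_add_inner_smul hu]

lemma chordHeights_nonempty_iff (hu : ‖u‖ = 1) {K : Set E} {y : E} :
    (chordHeights u K y).Nonempty ↔ perpProj u y ∈ perpProj u '' K := by
  constructor
  · rintro ⟨t, ht⟩
    exact ⟨_, ht, by rw [perpProj_add_smul, perpProj_perpProj]⟩
  · rintro ⟨z, hz, hzy⟩
    exact ⟨⟪z, u⟫, by rwa [chordHeights, Set.mem_ofPred_eq, ← hzy, perpProj_add_inner_smul hu]⟩

lemma chordHeights_inter_inner_ge (hu : ‖u‖ = 1) (K : Set E) (a : ℝ) (y : E) :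
    chordHeights u (K ∩ {z | a ≤ ⟪z, u⟫}) y = chordHeights u K y ∩ Set.Ici a := by
  ext t
  simp [chordHeights, inner_add_smul_self hu, inner_perpProj hu]

lemma chordHeights_add_smul (K : Set E) (y : E) (s : ℝ) :
    chordHeights u K (y + s • u) = chordHeights u K y := by
  simp only [chordHeights, perpProj_add_smul]

lemma midHeight_add_smul (K : Set E) (y : E) (s : ℝ) :
    midHeight u K (y + s • u) = midHeight u K y := by
  simp only [midHeight, chordHeights_add_smul]

lemma neg_chordHeights (K : Set E) (y : E) : -chordHeights u K y = chordHeights (-u) K y := by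
  have : perpProj (-u) = perpProj u := by
    simp only [perpProj, ← Set.neg_singleton, Submodule.span_neg]
  ext t
  simp [chordHeights, this]

lemma isCompact_chordHeights (hu : ‖u‖ = 1) {K : Set E} (hK : IsCompact K) (y : E) :
    IsCompact (chordHeights u K y) := by
  refine (hK.image (f := fun z => ⟪z, u⟫) (by fun_prop)).of_isClosed_subset
    (hK.isClosed.preimage (by fun_prop : Continuous fun t : ℝ => perpProj u y + t • u)) ?_
  intro t ht
  exact ⟨_, ht, (inner_add_smul_self hu _ t).trans (by rw [inner_perpProj hu, zero_add])⟩

lemma convex_chordHeights {K : Set E} (hK : Convex ℝ K) (y : E) :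
    Convex ℝ (chordHeights u K y) := by
  intro s hs t ht a b ha hb hab
  convert hK hs ht ha hb hab using 1
  obtain rfl : b = 1 - a := by linarith
  simp only [chordHeights, Set.mem_ofPred_eq, smul_eq_mul]
  congr! 1
  module

lemma add_two_mul_midHeight_sub_smul_mem (hu : ‖u‖ = 1) {K : Set E} (hK : IsCompact K)
    (hconv : Convex ℝ K) {y : E} (hy : y ∈ K) :
    y + (2 * (midHeight u K y - ⟪y, u⟫)) • u ∈ K := by
  have hcpt := isCompact_chordHeights hu hK y
  have hmem : ⟪y, u⟫ ∈ chordHeights u K y := by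
    simpa using (inner_add_mem_chordHeights hu (s := 0)).2 (by simpa using hy)
  refine (inner_add_mem_chordHeights hu).1 <|
    (convex_chordHeights hconv y).ordConnected.out (hcpt.sInf_mem ⟨_, hmem⟩)
      (hcpt.sSup_mem ⟨_, hmem⟩) ⟨?_, ?_⟩
  · linarith [le_csSup hcpt.bddAbove hmem, midHeight.eq_1 u K y]
  · linarith [csInf_le hcpt.bddBelow hmem, midHeight.eq_1 u K y]

lemma add_two_mul_midHeight_sub_smul_mem_interior (hu : ‖u‖ = 1) {K : Set E} (hK : IsCompact K)
    (hconv : Convex ℝ K) {y : E} (hy : y ∈ interior K) :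
    y + (2 * (midHeight u K y - ⟪y, u⟫)) • u ∈ interior K := by
  set t := 2 * (midHeight u K y - ⟪y, u⟫)
  refine add_smul_mem_interior_of_eventually_mem hconv hy ?_
  have hlim : Tendsto (fun s => y + (t - s) • u) (𝓝 t) (𝓝 y) :=
    Continuous.tendsto' (by fun_prop) _ _ (by simp)
  filter_upwards [hlim.eventually_mem (mem_interior_iff_mem_nhds.1 hy)] with s hs
  convert add_two_mul_midHeight_sub_smul_mem hu hK hconv hs using 1
  rw [midHeight_add_smul, inner_add_smul_self hu]
  module

lemma exists_add_smul_mem_interior_of_mem_interior (hu : ‖u‖ = 1) {K : Set E} (hK : IsCompact K)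
    (hconv : Convex ℝ K) {y : E} (hy : y ∈ interior K) :
    ∃ r > |⟪y, u⟫ - midHeight u K y|,
      y + (midHeight u K y - ⟪y, u⟫ + r) • u ∈ interior K ∧
      y + (midHeight u K y - ⟪y, u⟫ - r) • u ∈ interior K := by
  have hlim : Tendsto (fun s : ℝ => y + s • u) (𝓝 0) (𝓝 y) :=
    Continuous.tendsto' (by fun_prop) _ _ (by simp)
  obtain ⟨ε, hε, hball⟩ := nhds_basis_closedBall.mem_iff.1
    (hlim.eventually_mem (isOpen_interior.mem_nhds hy))
  have hnear {s : ℝ} (hs : |s| = ε) : y + s • u ∈ interior K := hball (by simp [hs])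
  have hreflect {s : ℝ} (hs : |s| = ε) :=
    add_two_mul_midHeight_sub_smul_mem_interior hu hK hconv (hnear hs)
  simp only [midHeight_add_smul, inner_add_smul_self hu] at hreflect
  refine ⟨|⟪y, u⟫ - midHeight u K y| + ε, lt_add_of_pos_right _ hε, ?_⟩
  have hpos : |ε| = ε := abs_of_pos hε
  have hneg : |-ε| = ε := by rw [abs_neg, hpos]
  rcases abs_cases (⟪y, u⟫ - midHeight u K y) with ⟨h, -⟩ | ⟨h, -⟩ <;> rw [h]
  · constructor
    · convert hnear hpos using 1; module
    · convert hreflect hpos using 1; module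
  · constructor
    · convert hreflect hneg using 1; module
    · convert hnear hneg using 1; module

lemma exists_cap_subset_of_add_smul_mem_interior (hu : ‖u‖ = 1) {K : Set E} (hK : Convex ℝ K)
    {p : E} {r : ℝ} (hr : 0 < r) (hpos : p + r • u ∈ interior K)
    (hneg : p - r • u ∈ interior K) :
    ∃ δ > 0, closedBall p r ∩ {q | ‖perpProj u (q - p)‖ ≤ δ} ⊆ K := by
  obtain ⟨δ₁, hδ₁, h₁⟩ := nhds_basis_closedBall.mem_iff.1 (mem_interior_iff_mem_nhds.1 hpos)
  obtain ⟨δ₂, hδ₂, h₂⟩ := nhds_basis_closedBall.mem_iff.1 (mem_interior_iff_mem_nhds.1 hneg)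
  refine ⟨min δ₁ δ₂, lt_min hδ₁ hδ₂, fun q ⟨hball, hq⟩ => ?_⟩
  obtain ⟨hq₁, hq₂⟩ : ‖perpProj u (q - p)‖ ≤ δ₁ ∧ ‖perpProj u (q - p)‖ ≤ δ₂ := le_min_iff.1 hq
  have ht : |⟪q - p, u⟫| ≤ r := by
    have := abs_real_inner_le_norm (q - p) u
    rw [hu, mul_one, ← dist_eq_norm] at this
    exact this.trans hball
  obtain ⟨hle, hge⟩ := abs_le.1 ht
  convert hK (h₁ (mem_closedBall_iff_norm.2 (by rwa [add_sub_cancel_left]) :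
    p + r • u + perpProj u (q - p) ∈ _))
    (h₂ (mem_closedBall_iff_norm.2 (by rwa [add_sub_cancel_left]) :
    p - r • u + perpProj u (q - p) ∈ _))
    (div_nonneg (by linarith : 0 ≤ r + ⟪q - p, u⟫) (by linarith : 0 ≤ 2 * r))
    (div_nonneg (by linarith : 0 ≤ r - ⟪q - p, u⟫) (by linarith : 0 ≤ 2 * r))
    (by field_simp; ring) using 1
  calc q = p + (perpProj u (q - p) + ⟪q - p, u⟫ • u) := by
        rw [perpProj_add_inner_smul hu, add_sub_cancel]
    _ = _ := by match_scalars <;> field_simp <;> ring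

lemma exists_cap_subset_of_mem_interior (hu : ‖u‖ = 1) {K : Set E} (hK : IsCompact K)
    (hconv : Convex ℝ K) {y : E} (hy : y ∈ interior K) :
    ∃ r > |⟪y, u⟫ - midHeight u K y|, ∃ δ > 0,
      closedBall (perpProj u y + midHeight u K y • u) r ∩
        {q | ‖perpProj u (q - perpProj u y)‖ ≤ δ} ⊆ K := by
  obtain ⟨r, hr, hpos, hneg⟩ := exists_add_smul_mem_interior_of_mem_interior hu hK hconv hy
  obtain ⟨δ, hδ, h⟩ := exists_cap_subset_of_add_smul_mem_interior hu hconv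
    (p := perpProj u y + midHeight u K y • u) ((abs_nonneg _).trans_lt hr)
    (by convert hpos using 1; rw [perpProj_apply hu]; module)
    (by convert hneg using 1; rw [perpProj_apply hu]; module)
  simp only [← sub_sub, map_sub _ _ (midHeight u K y • u), map_smul, perpProj_self, smul_zero,
    sub_zero] at h
  exact ⟨r, hr, δ, hδ, h⟩

variable [MeasurableSpace E] [BorelSpace E]

lemma measurable_sSup_chordHeights (hu : ‖u‖ = 1) {K : Set E} (hK : IsCompact K) :
    Measurable fun y => sSup (chordHeights u K y) := by
  have hproj {L : Set E} (hL : IsCompact L) : MeasurableSet (perpProj u ⁻¹' (perpProj u '' L)) :=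
    ((hL.image (perpProj u).continuous).isClosed.preimage (perpProj u).continuous).measurableSet
  refine measurable_of_Ici fun a => ?_
  have hset : (fun y => sSup (chordHeights u K y)) ⁻¹' Set.Ici a =
      perpProj u ⁻¹' (perpProj u '' (K ∩ {z | a ≤ ⟪z, u⟫})) ∪
        ({_y | a ≤ 0} \ perpProj u ⁻¹' (perpProj u '' K)) := by
    ext y
    simp only [Set.mem_preimage, Set.mem_union, Set.mem_sdiff, Set.mem_ofPred_eq, Set.mem_Ici,
      ← chordHeights_nonempty_iff hu, chordHeights_inter_inner_ge hu]
    rcases (chordHeights u K y).eq_empty_or_nonempty with hy | hy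
    · simp [hy]
    · simp only [hy, not_true, and_false, or_false]
      have hcpt := isCompact_chordHeights hu hK y
      exact ⟨fun h => ⟨_, hcpt.sSup_mem hy, h⟩, fun ⟨_, ht, hat⟩ =>
        (Set.mem_Ici.1 hat).trans (le_csSup hcpt.bddAbove ht)⟩
  rw [hset]
  exact (hproj (hK.inter_right (isClosed_le (by fun_prop) (by fun_prop)))).union
    ((MeasurableSet.const _).diff (hproj hK))

lemma measurable_midHeight (hu : ‖u‖ = 1) {K : Set E} (hK : IsCompact K) :
    Measurable (midHeight u K) := by
  have hinf : Measurable fun y => sInf (chordHeights u K y) := by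
    simp only [Real.sInf_def, neg_chordHeights]
    exact (measurable_sSup_chordHeights (by rwa [norm_neg]) hK).neg
  exact ((measurable_sSup_chordHeights hu hK).add hinf).div_const 2

lemma measurePreserving_chordUnshift [SecondCountableTopology E] (μ : Measure E) [SFinite μ]
    [μ.IsAddRightInvariant] (hu : ‖u‖ = 1) {φ : ℝ → ℝ} (hφ : Measurable φ) {K : Set E}
    (hK : IsCompact K) : MeasurePreserving (chordUnshift u φ K) μ μ :=
  measurePreserving_add_smul μ (f := fun y => midHeight u K y - φ (midHeight u K y))
    (by have := measurable_midHeight hu hK; fun_prop)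
    (by simp only [midHeight_add_smul, implies_true])

end Chords

section EssentialInclusion

variable {n : ℕ} {A B : Set (Euc n)}

lemma essSub_iff_ae_le : essSub A B ↔ A ≤ᵐ[volume] B := ae_le_set.symm

lemma essEq_iff_ae_eq : essEq A B ↔ A =ᵐ[volume] B := measure_symmDiff_eq_zero_iff

end EssentialInclusion

section Cylinders

variable {n : ℕ} {u : Euc n}

lemma cyl_eq (hu : ‖u‖ = 1) (c : Euc n) (ρ : ℝ) : cyl u c ρ = {y | ‖perpProj u (y - c)‖ ≤ ρ} := by
  simp only [cyl, perpProj_apply hu]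

lemma isClosed_cyl (u c : Euc n) (ρ : ℝ) : IsClosed (cyl u c ρ) :=
  isClosed_le (by fun_prop) continuous_const

lemma cyl_eq_preimage_closedBall (hu : ‖u‖ = 1) (c : Euc n) (ρ : ℝ) :
    cyl u c ρ = perpProj u ⁻¹' closedBall (perpProj u c) ρ := by
  ext y
  simp only [cyl_eq hu, Set.mem_preimage, mem_closedBall_iff_norm, map_sub, Set.mem_ofPred_eq]

lemma convex_cyl (hu : ‖u‖ = 1) (c : Euc n) (ρ : ℝ) : Convex ℝ (cyl u c ρ) := by
  rw [cyl_eq_preimage_closedBall hu]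
  exact (convex_closedBall _ _).linear_preimage (perpProj u).toLinearMap

lemma add_smul_mem_cyl_iff (hu : ‖u‖ = 1) {c y : Euc n} {ρ s : ℝ} :
    y + s • u ∈ cyl u c ρ ↔ y ∈ cyl u c ρ := by
  simp only [cyl_eq_preimage_closedBall hu, Set.mem_preimage, perpProj_add_smul]

lemma closedBall_add_smul_subset_cyl (hu : ‖u‖ = 1) (x : Euc n) (t r : ℝ) :
    closedBall (x + t • u) r ⊆ cyl u x r := by
  intro y hy
  have := (norm_perpProj_le u (y - (x + t • u))).trans (mem_closedBall_iff_norm.1 hy)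
  rwa [cyl_eq_preimage_closedBall hu, Set.mem_preimage, mem_closedBall_iff_norm,
    ← perpProj_add_smul x t, ← map_sub]

lemma isConvexBody_closedBall (x : Euc n) {r : ℝ} (hr : 0 < r) : isConvexBody (closedBall x r) :=
  ⟨isCompact_closedBall x r, convex_closedBall x r,
    (nonempty_ball.2 hr).mono ball_subset_interior_closedBall⟩

lemma isConvexBody_cap (hu : ‖u‖ = 1) (x : Euc n) (t : ℝ) {r δ : ℝ} (hr : 0 < r) (hδ : 0 < δ) :
    isConvexBody (closedBall (x + t • u) r ∩ cyl u x δ) := by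
  refine ⟨(isCompact_closedBall _ _).inter_right (isClosed_cyl _ _ _),
    (convex_closedBall _ _).inter (convex_cyl hu _ _), ?_⟩
  have hball : ball (x + t • u) (min r δ) ⊆ closedBall (x + t • u) r ∩ cyl u x δ := by
    refine ball_subset_closedBall.trans (Set.subset_inter ?_ ?_)
    · exact closedBall_subset_closedBall (min_le_left _ _)
    · exact (closedBall_subset_closedBall (min_le_right _ _)).trans
        (closedBall_add_smul_subset_cyl hu x t δ)
  exact (nonempty_ball.2 (lt_min hr hδ)).mono (interior_maximal hball isOpen_ball)

lemma cap_mem_nhds (hu : ‖u‖ = 1) {x : Euc n} {s t r δ : ℝ} (hr : |s - t| < r) (hδ : 0 < δ) :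
    closedBall (x + t • u) r ∩ cyl u x δ ∈ 𝓝 (x + s • u) := by
  refine inter_mem (closedBall_mem_nhds_of_mem ?_)
    (mem_of_superset (closedBall_mem_nhds _ hδ) (closedBall_add_smul_subset_cyl hu x s δ))
  rwa [mem_ball_iff_norm, add_sub_add_left_eq_sub, ← sub_smul, norm_smul, hu, mul_one,
    Real.norm_eq_abs]

end Cylinders

section CylinderMaps

variable {n : ℕ} {u : Euc n} {D : Set (Euc n) → Set (Euc n)}

namespace inJH

lemma measurableSet (hD : inJH u D) {K : Set (Euc n)} (hK : isConvexBody K) :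
    MeasurableSet (D K) := (hD.1 K hK).1

lemma volume_ne_top (hD : inJH u D) {K : Set (Euc n)} (hK : isConvexBody K) :
    volume (D K) ≠ ⊤ := (hD.1 K hK).2

lemma volume_eq (hD : inJH u D) {K : Set (Euc n)} (hK : isConvexBody K) :
    volume (D K) = volume K := hD.2.2.1 K hK

lemma ae_le_of_subset (hD : inJH u D) {K L : Set (Euc n)} (hK : isConvexBody K)
    (hL : isConvexBody L) (h : K ⊆ L) : D K ≤ᵐ[volume] D L :=
  essSub_iff_ae_le.1 (hD.2.1 K L hK hL (essSub_iff_ae_le.2 h.eventuallyLE))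

lemma ae_le_cyl (hD : inJH u D) {K : Set (Euc n)} (hK : isConvexBody K) {c : Euc n} {ρ : ℝ}
    (hρ : 0 < ρ) (h : K ⊆ cyl u c ρ) : D K ≤ᵐ[volume] cyl u c ρ :=
  essSub_iff_ae_le.1 (hD.2.2.2.2 K hK c ρ hρ (essSub_iff_ae_le.2 h.eventuallyLE))

lemma exists_ae_eq_closedBall (hn : n ≠ 0) (hD : inJH u D) (x : Euc n) {r : ℝ} (hr : 0 < r) :
    ∃ x', D (closedBall x r) =ᵐ[volume] closedBall x' r := by
  have hbody := isConvexBody_closedBall x hr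
  obtain ⟨x', r', hr', hx'⟩ :=
    hD.2.2.2.1 _ hbody ⟨x, r, hr, essEq_iff_ae_eq.2 (ae_eq_refl _)⟩
  rw [essEq_iff_ae_eq] at hx'
  have : NeZero n := ⟨hn⟩
  have hrr' : r' = r := eq_of_addHaar_closedBall_eq (μ := volume) hr'.le hr.le
    ((measure_congr hx').symm.trans (hD.volume_eq hbody))
  exact ⟨x', hrr' ▸ hx'⟩

lemma exists_ae_eq_closedBall_add_smul (hn : n ≠ 0) (hu : ‖u‖ = 1) (hD : inJH u D) {x : Euc n}
    (hx : ⟪x, u⟫ = 0) (t : ℝ) {r : ℝ} (hr : 0 < r) :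
    ∃ s : ℝ, D (closedBall (x + t • u) r) =ᵐ[volume] closedBall (x + s • u) r := by
  obtain ⟨x', hx'⟩ := hD.exists_ae_eq_closedBall hn (x + t • u) hr
  have hcyl : closedBall x' r ⊆ cyl u x r :=
    closedBall_subset_of_ae_le hr.ne' (isClosed_cyl u x r) <| hx'.symm.le.trans <|
      hD.ae_le_cyl (isConvexBody_closedBall _ hr) hr (closedBall_add_smul_subset_cyl hu x t r)
  rw [cyl_eq_preimage_closedBall hu] at hcyl
  have hx'eq : x + ⟪x', u⟫ • u = x' := by
    rw [← perpProj_add_inner_smul hu x', perpProj_eq_of_closedBall_subset hr hcyl,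
      perpProj_apply hu x, hx, zero_smul, sub_zero, inner_add_smul_self hu, hx, zero_add]
  exact ⟨⟪x', u⟫, hx'eq.symm ▸ hx'⟩

lemma exists_assocContr (hn : 2 ≤ n) (hu : ‖u‖ = 1) (hD : inJH u D) :
    ∃ φ, assocContr u D φ := by
  obtain ⟨e, he, heu⟩ := exists_norm_eq_one_inner_eq_zero (by rwa [finrank_euclideanSpace_fin]) u
  have hball (x : Euc n) (t r : ℝ) : ∃ s : ℝ, ⟪x, u⟫ = 0 → 0 < r →
      D (closedBall (x + t • u) r) =ᵐ[volume] closedBall (x + s • u) r := by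
    by_cases h : ⟪x, u⟫ = 0 ∧ 0 < r
    · exact (hD.exists_ae_eq_closedBall_add_smul (by omega) hu h.1 t h.2).imp fun s hs _ _ => hs
    · exact ⟨0, fun hx hr => absurd ⟨hx, hr⟩ h⟩
  choose T hT using hball
  have : Nontrivial (Euc n) := ⟨e, 0, norm_ne_zero_iff.1 (he ▸ one_ne_zero)⟩
  obtain ⟨φ, hφ, hTφ⟩ := exists_lipschitzWith_of_dist_shift_le hu he heu (T := T) <| by
    intro x x' t t' r r' hx hx' hr hdist
    have hr' : 0 < r' := hr.trans_le (le_of_add_le_of_nonneg_right hdist dist_nonneg)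
    have hle := hD.ae_le_of_subset (isConvexBody_closedBall _ hr) (isConvexBody_closedBall _ hr')
      (closedBall_subset_closedBall' (by rwa [add_comm]))
    exact dist_add_le_of_closedBall_subset hr.le <|
      closedBall_subset_of_ae_le hr.ne' isClosed_closedBall <|
        ((hT x t r hx hr).symm.le.trans hle).trans (hT x' t' r' hx' hr').le
  exact ⟨φ, hφ, fun x hx t r hr => essEq_iff_ae_eq.2 (hTφ x t r hx hr ▸ hT x t r hx hr)⟩

variable {φ : ℝ → ℝ}

lemma cap_ae_eq (hu : ‖u‖ = 1) (hD : inJH u D) (hφ : assocContr u D φ) {x : Euc n}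
    (hx : ⟪x, u⟫ = 0) (t : ℝ) {r δ : ℝ} (hr : 0 < r) (hδ : 0 < δ) :
    D (closedBall (x + t • u) r ∩ cyl u x δ) =ᵐ[volume]
      (closedBall (x + φ t • u) r ∩ cyl u x δ : Set (Euc n)) := by
  have hcap := isConvexBody_cap hu x t hr hδ
  have hball : D (closedBall (x + t • u) r ∩ cyl u x δ) ≤ᵐ[volume] closedBall (x + φ t • u) r :=
    (hD.ae_le_of_subset hcap (isConvexBody_closedBall _ hr) Set.inter_subset_left).trans
      (essEq_iff_ae_eq.1 (hφ.2 x hx t r hr)).le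
  have hcyl := hD.ae_le_cyl hcap hδ Set.inter_subset_right
  have hle : D (closedBall (x + t • u) r ∩ cyl u x δ) ≤ᵐ[volume]
      (closedBall (x + φ t • u) r ∩ cyl u x δ : Set (Euc n)) := by
    filter_upwards [hball, hcyl] with y hb hc hy using ⟨hb hy, hc hy⟩
  have htranslate : (closedBall (x + φ t • u) r ∩ cyl u x δ : Set (Euc n)) =
      (· + (t - φ t) • u) ⁻¹' (closedBall (x + t • u) r ∩ cyl u x δ) := by
    ext y
    rw [Set.mem_preimage, Set.mem_inter_iff, Set.mem_inter_iff, add_smul_mem_cyl_iff hu,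
      mem_closedBall_iff_norm, mem_closedBall_iff_norm,
      show y + (t - φ t) • u - (x + t • u) = y - (x + φ t • u) by module]
  refine ae_eq_of_ae_subset_of_measure_ge hle ?_ (hD.measurableSet hcap).nullMeasurableSet
    (measure_ne_top_of_subset Set.inter_subset_left measure_closedBall_lt_top.ne)
  rw [hD.volume_eq hcap, htranslate, measure_preimage_add_right]

lemma preimage_chordUnshift_interior_ae_le (hu : ‖u‖ = 1) (hD : inJH u D)
    (hφ : assocContr u D φ) {K : Set (Euc n)} (hK : isConvexBody K) :
    (chordUnshift u φ K ⁻¹' interior K : Set (Euc n)) ≤ᵐ[volume] D K := by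
  refine ae_le_set.2 (measure_null_of_locally_null _ fun z hz => ?_)
  set x := perpProj u z with hxz
  set h := midHeight u K z with hh
  have hx : ⟪x, u⟫ = 0 := inner_perpProj hu z
  obtain ⟨r, hr, δ, hδ, hsub⟩ := exists_cap_subset_of_mem_interior hu hK.1 hK.2.1 hz.1
  simp only [chordUnshift, perpProj_add_smul, midHeight_add_smul, inner_add_smul_self hu, ← hh,
    ← hxz] at hr hsub
  rw [← cyl_eq hu] at hsub
  have hr0 := (abs_nonneg _).trans_lt hr
  have hcap : (closedBall (x + φ h • u) r ∩ cyl u x δ : Set (Euc n)) ≤ᵐ[volume] D K :=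
    (hD.cap_ae_eq hu hφ hx h hr0 hδ).symm.le.trans
      (hD.ae_le_of_subset (isConvexBody_cap hu x h hr0 hδ) hK hsub)
  have hnhds : (closedBall (x + φ h • u) r ∩ cyl u x δ : Set (Euc n)) ∈ 𝓝 z := by
    rw [← perpProj_add_inner_smul hu z]
    refine cap_mem_nhds hu ?_ hδ
    convert hr using 2
    ring
  refine ⟨(closedBall (x + φ h • u) r ∩ cyl u x δ) \ D K,
    mem_of_superset (inter_mem_nhdsWithin _ hnhds) ?_, ae_le_set.1 hcap⟩
  exact fun y hy => ⟨hy.2, hy.1.2⟩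

lemma ae_eq_preimage_chordUnshift_interior (hu : ‖u‖ = 1) (hD : inJH u D)
    (hφ : assocContr u D φ) {K : Set (Euc n)} (hK : isConvexBody K) :
    D K =ᵐ[volume] chordUnshift u φ K ⁻¹' interior K := by
  have hshear := measurePreserving_chordUnshift volume hu hφ.1.continuous.measurable hK.1
  have hint : interior K =ᵐ[volume] K :=
    interior_ae_eq_of_null_frontier (hK.2.1.addHaar_frontier volume)
  refine (ae_eq_of_ae_subset_of_measure_ge (hD.preimage_chordUnshift_interior_ae_le hu hφ hK) ?_
    (hshear.measurable measurableSet_interior).nullMeasurableSet (hD.volume_ne_top hK)).symm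
  rw [hshear.measure_preimage measurableSet_interior.nullMeasurableSet, hD.volume_eq hK,
    measure_congr hint]

lemma ae_eq_chordShift (hu : ‖u‖ = 1) (hD : inJH u D) (hφ : assocContr u D φ)
    {K : Set (Euc n)} (hK : isConvexBody K) : D K =ᵐ[volume] chordShift u φ K :=
  (hD.ae_eq_preimage_chordUnshift_interior hu hφ hK).trans <|
    (measurePreserving_chordUnshift volume hu hφ.1.continuous.measurable
      hK.1).quasiMeasurePreserving.preimage_ae_eq <|
        interior_ae_eq_of_null_frontier (hK.2.1.addHaar_frontier volume)

end inJH

lemma convOnK_of_tendsto_assocContr (hu : ‖u‖ = 1) (hD : inJH u D) {φ : ℝ → ℝ}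
    (hφ : assocContr u D φ) {S : ℕ → Set (Euc n) → Set (Euc n)} (hS : ∀ k, inJH u (S k))
    {φs : ℕ → ℝ → ℝ} (hφs : ∀ k, assocContr u (S k) (φs k))
    (hlim : ∀ t, Tendsto (fun k => φs k t) atTop (𝓝 (φ t))) : convOnK S D := by
  intro K hK
  refine tendsto_measure_sd (fun k => (hS k).measurableSet hK) (hD.measurableSet hK)
    (hD.volume_ne_top hK) (fun k => ((hS k).volume_eq hK).trans (hD.volume_eq hK).symm) ?_
  filter_upwards [(hD.ae_eq_preimage_chordUnshift_interior hu hφ hK).mem_iff,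
    ae_all_iff.2 fun k => ((hS k).ae_eq_chordShift hu (hφs k) hK).mem_iff] with y hy hys hyD
  have hlimy : Tendsto (fun k => chordUnshift u (φs k) K y) atTop (𝓝 (chordUnshift u φ K y)) :=
    (((hlim _).const_sub _).smul_const u).const_add y
  filter_upwards [hlimy.eventually_mem (mem_interior_iff_mem_nhds.1 (hy.1 hyD))] with k hk
  exact (hys k).2 hk

end CylinderMaps

section SlantedSlab

variable {E : Type*} [NormedAddCommGroup E] [InnerProductSpace ℝ E] {u e : E} {m : ℝ}

/-- A slanted slab of slope `m` over the ball of radius `2` in `u⊥`: every chord parallel to `u`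
has length `2`, and the heights of the midpoints of these chords cover `[-m, m]`, so that this
single body detects the values of `φ` on that interval. -/
def slantedSlab (u e : E) (m : ℝ) : Set E :=
  {y | |⟪y, u⟫ - m * ⟪y, e⟫| ≤ 1 ∧ ‖perpProj u y‖ ≤ 2}

lemma slantedSlab_eq_preimage_inter_preimage (u e : E) (m : ℝ) : slantedSlab u e m =
    innerSL ℝ (u - m • e) ⁻¹' closedBall 0 1 ∩ perpProj u ⁻¹' closedBall 0 2 := by
  ext y
  simp only [slantedSlab, Set.mem_ofPred_eq, Set.mem_inter_iff, Set.mem_preimage,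
    innerSL_apply_apply, mem_closedBall_zero_iff, Real.norm_eq_abs, real_inner_comm y,
    inner_sub_right, real_inner_smul_right]

lemma inner_add_smul_of_inner_eq_zero (heu : ⟪e, u⟫ = 0) (y : E) (s : ℝ) :
    ⟪y + s • u, e⟫ = ⟪y, e⟫ := by
  rw [inner_add_left, real_inner_smul_left, real_inner_comm e u, heu, mul_zero, add_zero]

lemma norm_le_of_mem_slantedSlab (hu : ‖u‖ = 1) (he : ‖e‖ = 1) (heu : ⟪e, u⟫ = 0) {y : E}
    (hy : y ∈ slantedSlab u e m) : ‖y‖ ≤ 3 + 2 * |m| := by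
  obtain ⟨hslab, hperp⟩ := hy
  have hye : |⟪y, e⟫| ≤ 2 := by
    have := abs_real_inner_le_norm (perpProj u y) e
    rw [← inner_add_smul_of_inner_eq_zero heu _ ⟪y, u⟫, perpProj_add_inner_smul hu, he,
      mul_one] at this
    exact this.trans hperp
  have hyu : |⟪y, u⟫| ≤ 1 + 2 * |m| := by
    calc |⟪y, u⟫| ≤ |⟪y, u⟫ - m * ⟪y, e⟫| + |m * ⟪y, e⟫| := by
          simpa using abs_add_le (⟪y, u⟫ - m * ⟪y, e⟫) (m * ⟪y, e⟫)
      _ ≤ 1 + 2 * |m| := by rw [abs_mul, mul_comm 2]; gcongr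
  calc ‖y‖ = ‖perpProj u y + ⟪y, u⟫ • u‖ := by rw [perpProj_add_inner_smul hu]
    _ ≤ ‖perpProj u y‖ + ‖⟪y, u⟫ • u‖ := norm_add_le _ _
    _ ≤ 2 + (1 + 2 * |m|) := by
        rw [norm_smul, hu, mul_one, Real.norm_eq_abs]
        exact add_le_add hperp hyu
    _ = 3 + 2 * |m| := by ring

lemma isCompact_slantedSlab [FiniteDimensional ℝ E] (hu : ‖u‖ = 1) (he : ‖e‖ = 1)
    (heu : ⟪e, u⟫ = 0) : IsCompact (slantedSlab u e m) := by
  refine isCompact_of_isClosed_isBounded ?_ <|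
    isBounded_iff_forall_norm_le.2 ⟨_, fun y hy => norm_le_of_mem_slantedSlab hu he heu hy⟩
  rw [slantedSlab_eq_preimage_inter_preimage]
  exact (isClosed_closedBall.preimage (map_continuous _)).inter
    (isClosed_closedBall.preimage (map_continuous _))

lemma convex_slantedSlab : Convex ℝ (slantedSlab u e m) := by
  rw [slantedSlab_eq_preimage_inter_preimage]
  exact ((convex_closedBall 0 1).linear_preimage (innerSL ℝ (u - m • e)).toLinearMap).inter
    ((convex_closedBall 0 2).linear_preimage (perpProj u).toLinearMap)

lemma interior_slantedSlab_nonempty : (interior (slantedSlab u e m)).Nonempty := by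
  refine ⟨0, mem_interior_iff_mem_nhds.2 ?_⟩
  rw [slantedSlab_eq_preimage_inter_preimage]
  refine inter_mem ((map_continuous _).continuousAt.preimage_mem_nhds ?_)
    ((map_continuous _).continuousAt.preimage_mem_nhds ?_) <;> rw [map_zero]
  exacts [closedBall_mem_nhds _ one_pos, closedBall_mem_nhds _ two_pos]

lemma add_smul_mem_slantedSlab_iff (hu : ‖u‖ = 1) (heu : ⟪e, u⟫ = 0) {y : E} {s : ℝ} :
    y + s • u ∈ slantedSlab u e m ↔ |⟪y, u⟫ + s - m * ⟪y, e⟫| ≤ 1 ∧ ‖perpProj u y‖ ≤ 2 := by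
  rw [slantedSlab, Set.mem_ofPred_eq, inner_add_smul_self hu,
    inner_add_smul_of_inner_eq_zero heu, perpProj_add_smul]

lemma midHeight_slantedSlab (hu : ‖u‖ = 1) (heu : ⟪e, u⟫ = 0) {y : E} (hy : ‖perpProj u y‖ ≤ 2) :
    midHeight u (slantedSlab u e m) y = m * ⟪y, e⟫ := by
  have hchord : chordHeights u (slantedSlab u e m) y =
      Set.Icc (m * ⟪y, e⟫ - 1) (m * ⟪y, e⟫ + 1) := by
    ext t
    obtain ⟨s, rfl⟩ : ∃ s, t = ⟪y, u⟫ + s := ⟨t - ⟪y, u⟫, by ring⟩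
    rw [inner_add_mem_chordHeights hu, add_smul_mem_slantedSlab_iff hu heu, abs_le, Set.mem_Icc]
    constructor
    · rintro ⟨⟨h₁, h₂⟩, -⟩
      constructor <;> linarith
    · rintro ⟨h₁, h₂⟩
      exact ⟨⟨by linarith, by linarith⟩, hy⟩
  rw [midHeight, hchord, csSup_Icc (by linarith), csInf_Icc (by linarith)]
  ring

lemma mem_chordShift_slantedSlab_iff (hu : ‖u‖ = 1) (heu : ⟪e, u⟫ = 0) {φ : ℝ → ℝ} {y : E} :
    y ∈ chordShift u φ (slantedSlab u e m) ↔
      |⟪y, u⟫ - φ (m * ⟪y, e⟫)| ≤ 1 ∧ ‖perpProj u y‖ ≤ 2 := by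
  rw [chordShift, Set.mem_preimage, chordUnshift, add_smul_mem_slantedSlab_iff hu heu]
  refine and_congr_left fun hy => ?_
  rw [midHeight_slantedSlab hu heu hy]
  ring_nf

lemma exists_abs_sub_le_and_le_abs_sub {a b r : ℝ} (hr : 0 ≤ r) :
    ∃ t, |t - a| ≤ r ∧ |a - b| + r ≤ |t - b| := by
  rcases le_total b a with h | h
  · refine ⟨a + r, by simp [abs_of_nonneg hr], ?_⟩
    rw [abs_of_nonneg (by linarith), abs_of_nonneg (by linarith)]
    linarith
  · refine ⟨a - r, by simp [abs_of_nonneg hr], ?_⟩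
    rw [abs_of_nonpos (by linarith), abs_of_nonpos (by linarith)]
    linarith

lemma abs_inner_sub_comp_sub_le (hu : ‖u‖ = 1) (he : ‖e‖ = 1) (hm : 0 ≤ m) {φ : ℝ → ℝ}
    (hφ : LipschitzWith 1 φ) (y z : E) :
    |(⟪y, u⟫ - φ (m * ⟪y, e⟫)) - (⟪z, u⟫ - φ (m * ⟪z, e⟫))| ≤ (m + 1) * dist y z := by
  have hinner {v : E} (hv : ‖v‖ = 1) : |⟪y, v⟫ - ⟪z, v⟫| ≤ dist y z := by
    rw [← inner_sub_left, dist_eq_norm]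
    simpa [hv] using abs_real_inner_le_norm (y - z) v
  calc |(⟪y, u⟫ - φ (m * ⟪y, e⟫)) - (⟪z, u⟫ - φ (m * ⟪z, e⟫))|
      ≤ |⟪y, u⟫ - ⟪z, u⟫| + |φ (m * ⟪y, e⟫) - φ (m * ⟪z, e⟫)| := by
        rw [sub_sub_sub_comm]; exact abs_sub _ _
    _ ≤ dist y z + |m * ⟪y, e⟫ - m * ⟪z, e⟫| :=
        add_le_add (hinner hu) (by simpa [Real.dist_eq] using hφ.dist_le_mul _ _)
    _ ≤ dist y z + m * dist y z := by
        rw [← mul_sub, abs_mul, abs_of_nonneg hm]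
        gcongr
        exact hinner he
    _ = (m + 1) * dist y z := by ring

lemma exists_closedBall_subset_chordShift_sdiff (hu : ‖u‖ = 1) (he : ‖e‖ = 1)
    (heu : ⟪e, u⟫ = 0) (hm : 0 < m) {φ ψ : ℝ → ℝ} (hφ : LipschitzWith 1 φ)
    (hψ : LipschitzWith 1 ψ) {c τ : ℝ} (hc : |c| ≤ m) (hmτ : (m + 1) * τ ≤ 1)
    (hgap : 2 * ((m + 1) * τ) < |ψ c - φ c|) :
    ∃ z, closedBall z τ ⊆
      chordShift u ψ (slantedSlab u e m) \ chordShift u φ (slantedSlab u e m) := by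
  obtain ⟨t, htψ, htφ⟩ :=
    exists_abs_sub_le_and_le_abs_sub (a := ψ c) (b := φ c) (sub_nonneg.2 hmτ)
  set z := (c / m) • e + t • u with hz
  have hzu : ⟪z, u⟫ = t := by
    rw [hz, inner_add_smul_self hu, real_inner_smul_left, heu, mul_zero, zero_add]
  have hze : m * ⟪z, e⟫ = c := by
    rw [hz, inner_add_smul_of_inner_eq_zero heu, real_inner_smul_left, real_inner_self_eq_norm_sq,
      he]
    field_simp
  have hzperp : ‖perpProj u z‖ ≤ 1 := by
    rw [hz, perpProj_add_smul]
    refine (norm_perpProj_le _ _).trans ?_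
    rwa [norm_smul, he, mul_one, Real.norm_eq_abs, abs_div, abs_of_pos hm, div_le_one hm]
  refine ⟨z, fun y hy => ?_⟩
  have hdist : (m + 1) * dist y z ≤ (m + 1) * τ := by gcongr; exact hy
  have hnear {χ : ℝ → ℝ} (hχ : LipschitzWith 1 χ) :=
    (abs_inner_sub_comp_sub_le hu he hm.le hχ y z).trans hdist
  rw [Set.mem_sdiff, mem_chordShift_slantedSlab_iff hu heu, mem_chordShift_slantedSlab_iff hu heu]
  refine ⟨⟨?_, ?_⟩, fun hyφ => ?_⟩
  · have hyψ := (abs_sub_abs_le_abs_sub _ _).trans (hnear hψ)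
    rw [hzu, hze] at hyψ
    linarith
  · have hyz : ‖y - z‖ ≤ 1 := by
      rw [← dist_eq_norm]
      nlinarith [mul_nonneg hm.le (dist_nonneg (x := y) (y := z))]
    calc ‖perpProj u y‖ = ‖perpProj u z + perpProj u (y - z)‖ := by
          rw [← map_add, add_sub_cancel]
      _ ≤ ‖perpProj u z‖ + ‖perpProj u (y - z)‖ := norm_add_le _ _
      _ ≤ 1 + 1 := add_le_add hzperp ((norm_perpProj_le _ _).trans hyz)
      _ = 2 := one_add_one_eq_two
  · have hzφ := (abs_sub_abs_le_abs_sub _ _).trans ((abs_sub_comm _ _).trans_le (hnear hφ))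
    rw [hzu, hze] at hzφ
    linarith [hyφ.1]

end SlantedSlab

section Approximation

variable {n : ℕ} {u : Euc n}

lemma exists_isConvexBody_forall_abs_assocContr_sub_lt (hn : 2 ≤ n) (hu : ‖u‖ = 1) {m η : ℝ}
    (hm : 0 < m) (hη : 0 < η) :
    ∃ K : Set (Euc n), isConvexBody K ∧ ∃ ε > 0, ∀ D D' φ ψ, inJH u D → inJH u D' →
      assocContr u D φ → assocContr u D' ψ → volume (sd (D' K) (D K)) < ε →
        ∀ c, |c| ≤ m → |ψ c - φ c| < η := by
  obtain ⟨e, he, heu⟩ := exists_norm_eq_one_inner_eq_zero (by rwa [finrank_euclideanSpace_fin]) u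
  have hK : isConvexBody (slantedSlab u e m) :=
    ⟨isCompact_slantedSlab hu he heu, convex_slantedSlab, interior_slantedSlab_nonempty⟩
  set τ := min 1 (η / 4) / (m + 1)
  have hτpos : 0 < τ := by positivity
  have hmτ : (m + 1) * τ = min 1 (η / 4) := mul_div_cancel₀ _ (by positivity)
  refine ⟨slantedSlab u e m, hK, volume (closedBall (0 : Euc n) τ),
    measure_closedBall_pos _ _ hτpos, fun D D' φ ψ hD hD' hφ hψ hlt c hc => ?_⟩
  by_contra! hgap
  obtain ⟨z, hz⟩ := exists_closedBall_subset_chordShift_sdiff hu he heu hm hφ.1 hψ.1 hc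
    (hmτ ▸ min_le_left _ _)
    (hgap.trans_lt' (by rw [hmτ]; linarith [min_le_right 1 (η / 4)]))
  refine hlt.not_ge ?_
  calc volume (closedBall 0 τ) = volume (closedBall z τ) :=
        (Measure.addHaar_closedBall_center volume z τ).symm
    _ ≤ volume (chordShift u ψ (slantedSlab u e m) \ chordShift u φ (slantedSlab u e m)) :=
        measure_mono hz
    _ = volume (D' (slantedSlab u e m) \ D (slantedSlab u e m)) :=
        measure_congr ((hD'.ae_eq_chordShift hu hψ hK).diff (hD.ae_eq_chordShift hu hφ hK)).symm
    _ ≤ volume (sd (D' (slantedSlab u e m)) (D (slantedSlab u e m))) :=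
        measure_mono Set.subset_union_left

lemma tendsto_of_forall_abs_sub_lt {f : ℕ → ℝ → ℝ} {g : ℝ → ℝ}
    (h : ∀ k : ℕ, ∀ c, |c| ≤ (k : ℝ) + 1 → |f k c - g c| < 1 / ((k : ℝ) + 1)) (c : ℝ) :
    Tendsto (fun k => f k c) atTop (𝓝 (g c)) := by
  refine tendsto_iff_dist_tendsto_zero.2 <| squeeze_zero' (.of_forall fun k => dist_nonneg) ?_
    tendsto_one_div_add_atTop_nhds_zero_nat
  filter_upwards [tendsto_natCast_atTop_atTop.eventually_ge_atTop |c|] with k hk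
  exact (h k c (by linarith)).le

end Approximation

/-- Lemma 6.3: for a subfamily `𝒥′ ⊂ 𝒥_H(𝒦ⁿₙ)`, a map in `𝒥_H(𝒦ⁿₙ)` is approximable on
the convex bodies by maps in `𝒥′` if and only if it is weakly approximable on the convex
bodies by maps in `𝒥′`. -/
theorem stmt8 {n : ℕ} (hn : 2 ≤ n) (u : Euc n) (hu : ‖u‖ = 1) (t₀ : ℝ)
    (𝓙' : Set (Set (Euc n) → Set (Euc n))) (h𝓙' : ∀ W ∈ 𝓙', inJH u W)
    (D : Set (Euc n) → Set (Euc n)) (hD : inJH u D) :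
    (∃ S : ℕ → Set (Euc n) → Set (Euc n), (∀ k, S k ∈ 𝓙') ∧
        ∀ K : Set (Euc n), isConvexBody K →
          Tendsto (fun k => volume (sd (S k K) (D K))) atTop (𝓝 0)) ↔
    (∀ K : Set (Euc n), isConvexBody K →
        ∃ S : ℕ → Set (Euc n) → Set (Euc n), (∀ k, S k ∈ 𝓙') ∧
          Tendsto (fun k => volume (sd (S k K) (D K))) atTop (𝓝 0)) := by
  refine ⟨fun ⟨S, hS, hlim⟩ K hK => ⟨S, hS, hlim K hK⟩, fun hweak => ?_⟩
  obtain ⟨φ, hφ⟩ := hD.exists_assocContr hn hu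
  have hclose (m : ℕ) : ∃ W ∈ 𝓙', ∃ ψ, assocContr u W ψ ∧
      ∀ c : ℝ, |c| ≤ (m : ℝ) + 1 → |ψ c - φ c| < 1 / ((m : ℝ) + 1) := by
    obtain ⟨K, hK, ε, hε, hdetect⟩ := exists_isConvexBody_forall_abs_assocContr_sub_lt hn hu
      (m := (m : ℝ) + 1) (η := 1 / ((m : ℝ) + 1)) (by positivity) (by positivity)
    obtain ⟨S, hS, hlim⟩ := hweak K hK
    obtain ⟨k, hk⟩ := (hlim.eventually (gt_mem_nhds hε)).exists
    obtain ⟨ψ, hψ⟩ := (h𝓙' _ (hS k)).exists_assocContr hn hu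
    exact ⟨S k, hS k, ψ, hψ, hdetect D (S k) φ ψ hD (h𝓙' _ (hS k)) hφ hψ hk⟩
  choose S hS ψ hψ hψφ using hclose
  exact ⟨S, hS, convOnK_of_tendsto_assocContr hu hD hφ (fun k => h𝓙' _ (hS k)) hψ
    (tendsto_of_forall_abs_sub_lt hψφ)⟩
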